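/- Let Ω ⊆ ℝ^d be a bounded open set and f : cl(Ω) → [0,∞) continuous. Let u : cl(Ω) → ℝ be upper semicontinuous and a viscosity subsolution of the Bellman equation in Ω (for every φ ∈ C²(Ω) such that u − φ attains a local maximum at x ∈ Ω, H(D²φ(x), f(x)) ≤ 0), and let v : cl(Ω) → ℝ be lower semicontinuous and a viscosity supersolution of the Bellman equation in Ω (for every φ ∈ C²(Ω) such that v − φ attains a local minimum at x ∈ Ω, H(D²φ(x), f(x)) ≥ 0). If u ≤ v on the boundary ∂Ω, then u ≤ v on all of cl(Ω). -/

import Mathlib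

open Matrix Set

/-- The set 𝐒₁ of positive semidefinite symmetric d×d real matrices with unit trace. -/
def S1set (d : ℕ) : Set (Matrix (Fin d) (Fin d) ℝ) :=
  {B | B.PosSemidef ∧ B.trace = 1}

/-- The value −B:A + f·(det B)^(1/d) appearing under the supremum of the Bellman operator. -/
noncomputable def bval (d : ℕ) (A B : Matrix (Fin d) (Fin d) ℝ) (f : ℝ) : ℝ :=
  -((B * A).trace) + f * B.det ^ ((1 : ℝ) / d)

/-- The Bellman operator H(A,f) = sup_{B ∈ 𝐒₁} (−B:A + f·(det B)^(1/d)). -/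
noncomputable def bellman (d : ℕ) (A : Matrix (Fin d) (Fin d) ℝ) (f : ℝ) : ℝ :=
  sSup ((fun B => bval d A B f) '' S1set d)

/-- The Monge–Ampère operator M(A,f) = (f/d)^d − det A. -/
noncomputable def MAop (d : ℕ) (A : Matrix (Fin d) (Fin d) ℝ) (f : ℝ) : ℝ :=
  (f / d) ^ d - A.det

/-- The Hessian matrix D²φ(x) of φ : ℝ^d → ℝ at x. -/
noncomputable def hessianM (d : ℕ) (φ : (Fin d → ℝ) → ℝ) (x : Fin d → ℝ) :
    Matrix (Fin d) (Fin d) ℝ :=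
  fun i j => iteratedFDeriv ℝ 2 φ x ![Pi.single i 1, Pi.single j 1]

/-!
A subsolution `u` of the Bellman equation is, for each fixed `B`, a viscosity subsolution of the
linear equation `B : D²u ≥ f (det B)^(1/d)`. Taking `B` of rank one, `u` is semiconvex, hence
continuous. For a general `B` the linear inequality on a ball is equivalent to a mean value
inequality with respect to `B`-harmonic measure: the Dirichlet problem on the unit ball has
polynomial solutions for polynomial data, and the value at the centre extends to a continuous
functional on `C(sphere)`. Averaging over translates preserves the mean value inequality, so
mollifications of `u` are classical subsolutions up to the oscillation of `f`.

If `u > v` somewhere, then `u - v + η |y|²` has an interior maximum for some `η > 0`. A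
mollification of `u` plus a quadratic perturbation is then a smooth strict subsolution touching `v`
from below, which contradicts the definition of a viscosity supersolution.
-/

open Filter Topology

section LineDerivatives

variable {E : Type*} [NormedAddCommGroup E] [NormedSpace ℝ E] {φ : E → ℝ}

lemma deriv_deriv_comp_add_smul (hφ : ContDiff ℝ 2 φ) (x e : E) :
    deriv (deriv fun t : ℝ => φ (x + t • e)) 0 = fderiv ℝ (fderiv ℝ φ) x e e := by
  have line_deriv (t : ℝ) : HasDerivAt (fun t : ℝ => x + t • e) e t := by
    simpa using ((hasDerivAt_id t).smul_const e).const_add x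
  have first (t : ℝ) :
      HasDerivAt (fun t : ℝ => φ (x + t • e)) (fderiv ℝ φ (x + t • e) e) t :=
    (hφ.differentiable two_ne_zero _).hasFDerivAt.comp_hasDerivAt t (line_deriv t)
  have second : HasDerivAt (fun t : ℝ => fderiv ℝ φ (x + t • e)) (fderiv ℝ (fderiv ℝ φ) x e) 0 := by
    have hdiff : Differentiable ℝ (fderiv ℝ φ) :=
      (hφ.fderiv_right (m := 1) le_rfl).differentiable one_ne_zero
    have hcomp := (hdiff (x + (0 : ℝ) • e)).hasFDerivAt.comp_hasDerivAt 0 (line_deriv 0)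
    rw [zero_smul, add_zero] at hcomp
    exact hcomp
  rw [funext fun t => (first t).deriv]
  simpa using (second.clm_apply (hasDerivAt_const 0 e)).deriv

lemma deriv_deriv_nonpos_of_isLocalMax {g : ℝ → ℝ} {t : ℝ} (hg : ContinuousAt g t)
    (hmax : IsLocalMax g t) : deriv (deriv g) t ≤ 0 := by
  by_contra! hpos
  have hmin : IsLocalMin g t := isLocalMin_of_deriv_deriv_pos hpos hmax.deriv_eq_zero hg
  have hconst : g =ᶠ[𝓝 t] fun _ => g t := by
    filter_upwards [hmax, hmin] with s h₁ h₂ using le_antisymm h₁ h₂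
  have hzero : deriv (deriv g) t = 0 := by simpa using hconst.deriv.deriv_eq
  exact hpos.ne' hzero

lemma fderiv_fderiv_apply_self_nonpos_of_isLocalMax (hφ : ContDiff ℝ 2 φ) {x : E}
    (hmax : IsLocalMax φ x) (e : E) : fderiv ℝ (fderiv ℝ φ) x e e ≤ 0 := by
  have hline : Continuous fun t : ℝ => x + t • e := by fun_prop
  rw [← deriv_deriv_comp_add_smul hφ]
  refine deriv_deriv_nonpos_of_isLocalMax (hφ.continuous.comp hline).continuousAt ?_
  have hx : Tendsto (fun t : ℝ => x + t • e) (𝓝 0) (𝓝 x) := by simpa using hline.tendsto 0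
  simpa [IsLocalMax, IsMaxFilter] using hx.eventually hmax

end LineDerivatives

section TraceHess

variable {d : ℕ} {B : Matrix (Fin d) (Fin d) ℝ} {φ ψ : (Fin d → ℝ) → ℝ} {x : Fin d → ℝ}

/-- The constant-coefficient second-order operator `B : D²φ`, evaluated at `x`. -/
noncomputable def traceHess (B : Matrix (Fin d) (Fin d) ℝ) (φ : (Fin d → ℝ) → ℝ)
    (x : Fin d → ℝ) : ℝ :=
  (B * hessianM d φ x).trace

lemma traceHess_eq_sum (B : Matrix (Fin d) (Fin d) ℝ) (φ : (Fin d → ℝ) → ℝ) (x : Fin d → ℝ) :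
    traceHess B φ x = ∑ i, ∑ j, B i j *
      fderiv ℝ (fderiv ℝ φ) x (Pi.single j 1) (Pi.single i 1) := by
  simp [traceHess, hessianM, Matrix.trace, Matrix.mul_apply, iteratedFDeriv_two_apply]

lemma traceHess_const (a : ℝ) : traceHess B (fun _ => a) x = 0 := by simp [traceHess_eq_sum]

lemma traceHess_add (hφ : ContDiff ℝ 2 φ) (hψ : ContDiff ℝ 2 ψ) :
    traceHess B (fun y => φ y + ψ y) x = traceHess B φ x + traceHess B ψ x := by
  have hadd : hessianM d (fun y => φ y + ψ y) x = hessianM d φ x + hessianM d ψ x := by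
    ext i j
    simp [hessianM, fun_iteratedFDeriv_add_apply hφ.contDiffAt hψ.contDiffAt]
  simp [traceHess, hadd, Matrix.mul_add]

lemma traceHess_const_mul (hφ : ContDiff ℝ 2 φ) (k : ℝ) :
    traceHess B (fun y => k * φ y) x = k * traceHess B φ x := by
  have hmul : hessianM d (fun y => k * φ y) x = k • hessianM d φ x := by
    ext i j
    exact DFunLike.congr_fun (iteratedFDeriv_const_smul_apply' (a := k) hφ.contDiffAt) _
  simp [traceHess, hmul]

lemma traceHess_neg : traceHess B (fun y => -φ y) x = -traceHess B φ x := by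
  have hneg : hessianM d (fun y => -φ y) x = -hessianM d φ x := by
    ext i j
    exact DFunLike.congr_fun (iteratedFDeriv_neg_apply (𝕜 := ℝ) (i := 2) (f := φ)) _
  simp [traceHess, hneg]

lemma traceHess_sub (hφ : ContDiff ℝ 2 φ) (hψ : ContDiff ℝ 2 ψ) :
    traceHess B (fun y => φ y - ψ y) x = traceHess B φ x - traceHess B ψ x := by
  simp only [sub_eq_add_neg]
  rw [traceHess_add hφ hψ.neg, traceHess_neg]

lemma traceHess_comp_add_smul (hφ : ContDiff ℝ 2 φ) (r : ℝ) (y : Fin d → ℝ) :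
    traceHess B (fun z => φ (x + r • z)) y = r ^ 2 * traceHess B φ (x + r • y) := by
  have hscale : hessianM d (fun z => φ (x + r • z)) y = r ^ 2 • hessianM d φ (x + r • y) := by
    ext i j
    have hshift : ContDiff ℝ 2 fun z => φ (x + z) := by fun_prop
    have hcomp := congrFun (iteratedFDeriv_comp_const_smul r hshift) y
    rw [iteratedFDeriv_comp_add_left] at hcomp
    exact DFunLike.congr_fun hcomp _
  simp [traceHess, hscale]

lemma continuous_traceHess (hφ : ContDiff ℝ 2 φ) : Continuous (traceHess B φ) := by
  have hsnd : Continuous (fderiv ℝ (fderiv ℝ φ)) :=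
    (hφ.fderiv_right (m := 1) le_rfl).continuous_fderiv one_ne_zero
  simp only [funext (traceHess_eq_sum B φ)]
  exact continuous_finsetSum _ fun i _ => continuous_finsetSum _ fun j _ =>
    continuous_const.mul ((hsnd.clm_apply continuous_const).clm_apply continuous_const)

lemma traceHess_smul_left (k : ℝ) : traceHess (k • B) φ x = k * traceHess B φ x := by
  simp [traceHess]

lemma traceHess_vecMulVec (e : Fin d → ℝ) :
    traceHess (vecMulVec e e) φ x = fderiv ℝ (fderiv ℝ φ) x e e := by
  rw [traceHess_eq_sum]
  conv_rhs => rw [pi_eq_sum_univ' e]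
  simp only [map_sum, map_smul, _root_.sum_apply, _root_.smul_apply, smul_eq_mul,
    Finset.mul_sum, vecMulVec_apply, mul_assoc]

lemma traceHess_nonpos_of_isLocalMax (hB : B.PosSemidef) (hφ : ContDiff ℝ 2 φ)
    (hmax : IsLocalMax φ x) : traceHess B φ x ≤ 0 := by
  obtain ⟨m, v, rfl⟩ := Matrix.posSemidef_iff_eq_sum_vecMulVec.1 hB
  have hsum : traceHess (∑ k, vecMulVec (v k) (star (v k))) φ x =
      ∑ k, fderiv ℝ (fderiv ℝ φ) x (v k) (v k) := by
    simp only [← traceHess_vecMulVec, traceHess, Finset.sum_mul, Matrix.trace_sum, star_trivial]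
  rw [hsum]
  exact Finset.sum_nonpos fun k _ => fderiv_fderiv_apply_self_nonpos_of_isLocalMax hφ hmax (v k)

end TraceHess

/-- `u` satisfies `B : D²u ≥ c` in the viscosity sense on `V`. The test functions are
globally `C²`, so that they can be translated and rescaled freely. -/
def IsSubsolution {d : ℕ} (B : Matrix (Fin d) (Fin d) ℝ) (c : ℝ) (V : Set (Fin d → ℝ))
    (u : (Fin d → ℝ) → ℝ) : Prop :=
  ∀ φ : (Fin d → ℝ) → ℝ, ContDiff ℝ 2 φ →
    ∀ z ∈ V, IsLocalMax (fun y => u y - φ y) z → c ≤ traceHess B φ z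

namespace IsSubsolution

variable {d : ℕ} {B : Matrix (Fin d) (Fin d) ℝ} {c : ℝ} {V : Set (Fin d → ℝ)}
  {u ψ : (Fin d → ℝ) → ℝ}

lemma of_contDiff (hB : B.PosSemidef) (hu : ContDiff ℝ 2 u) (hc : ∀ z ∈ V, c ≤ traceHess B u z) :
    IsSubsolution B c V u := by
  intro φ hφ z hz hmax
  have hle := traceHess_nonpos_of_isLocalMax hB (hu.sub hφ) hmax
  rw [traceHess_sub hu hφ] at hle
  linarith [hc z hz]

lemma add_contDiff (hu : IsSubsolution B c V u) (hψ : ContDiff ℝ 2 ψ) {c' : ℝ}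
    (hc : ∀ z ∈ V, c' ≤ c + traceHess B ψ z) : IsSubsolution B c' V fun y => u y + ψ y := by
  intro φ hφ z hz hmax
  have hle := hu (fun y => φ y - ψ y) (hφ.sub hψ) z hz
    (by simpa only [sub_sub_eq_add_sub] using hmax)
  rw [traceHess_sub hφ hψ] at hle
  linarith [hc z hz]

lemma smul_left (hu : IsSubsolution B c V u) {k : ℝ} (hk : 0 ≤ k) :
    IsSubsolution (k • B) (k * c) V u := fun φ hφ z hz hmax => by
  rw [traceHess_smul_left]
  exact mul_le_mul_of_nonneg_left (hu φ hφ z hz hmax) hk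

lemma mono_set (hu : IsSubsolution B c V u) {W : Set (Fin d → ℝ)} (hWV : W ⊆ V) :
    IsSubsolution B c W u := fun φ hφ z hz => hu φ hφ z (hWV hz)

lemma congr_of_eqOn (hu : IsSubsolution B c V u) (hV : IsOpen V) {w : (Fin d → ℝ) → ℝ}
    (hw : EqOn w u V) : IsSubsolution B c V w := by
  intro φ hφ z hz hmax
  refine hu φ hφ z hz (hmax.congr ?_)
  filter_upwards [hV.mem_nhds hz] with y hy
  rw [hw hy]

lemma comp_add_smul (hu : IsSubsolution B c V u) (x : Fin d → ℝ) {r : ℝ} (hr : r ≠ 0) :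
    IsSubsolution B (r ^ 2 * c) {y | x + r • y ∈ V} fun y => u (x + r • y) := by
  intro φ hφ z hz hmax
  have hinv (y : Fin d → ℝ) : x + r • (-(r⁻¹ • x) + r⁻¹ • y) = y := by
    rw [smul_add, smul_neg, smul_inv_smul₀ hr, smul_inv_smul₀ hr, add_neg_cancel_left]
  have hinv' : -(r⁻¹ • x) + r⁻¹ • (x + r • z) = z := by
    rw [smul_add, inv_smul_smul₀ hr, neg_add_cancel_left]
  have hψ : ContDiff ℝ 2 fun y => φ (-(r⁻¹ • x) + r⁻¹ • y) := by fun_prop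
  have hmax' : IsLocalMax (fun y => u y - φ (-(r⁻¹ • x) + r⁻¹ • y)) (x + r • z) := by
    have hcont : Continuous fun y : Fin d → ℝ => -(r⁻¹ • x) + r⁻¹ • y := by fun_prop
    have htendsto := hcont.tendsto (x + r • z)
    rw [hinv'] at htendsto
    have hev := htendsto.eventually hmax
    simpa only [IsLocalMax, IsMaxFilter, hinv, hinv'] using hev
  have hle := hu _ hψ _ hz hmax'
  rw [traceHess_comp_add_smul hφ, hinv'] at hle
  calc r ^ 2 * c ≤ r ^ 2 * (r⁻¹ ^ 2 * traceHess B φ z) := by gcongr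
    _ = traceHess B φ z := by field_simp

lemma le_of_le_on_diff (hu : IsSubsolution B c V u) (hV : IsOpen V) {K : Set (Fin d → ℝ)}
    (hK : IsCompact K) (hVK : V ⊆ K) (husc : UpperSemicontinuousOn u K) (hψ : ContDiff ℝ 2 ψ)
    (hc : ∀ z ∈ V, traceHess B ψ z < c) (hle : ∀ z ∈ K \ V, u z ≤ ψ z) : ∀ z ∈ K, u z ≤ ψ z := by
  intro z hz
  have husc' : UpperSemicontinuousOn (fun y => u y - ψ y) K := by
    simpa only [sub_eq_add_neg, Pi.neg_apply] using
      husc.add hψ.continuous.neg.continuousOn.upperSemicontinuousOn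
  obtain ⟨m, hm, hmax⟩ := husc'.exists_isMaxOn ⟨z, hz⟩ hK
  have hmV : m ∉ V := fun hmV =>
    (hc m hmV).not_ge (hu ψ hψ m hmV (hmax.isLocalMax (mem_of_superset (hV.mem_nhds hmV) hVK)))
  have hzm : u z - ψ z ≤ u m - ψ m := hmax hz
  linarith [hle m ⟨hm, hmV⟩]

end IsSubsolution

section Convexity

variable {d : ℕ} {V : Set (Fin d → ℝ)} {u φ : (Fin d → ℝ) → ℝ} {a e : Fin d → ℝ}
  {g : (Fin d → ℝ) →L[ℝ] ℝ}

lemma dotProduct_self_nonneg (y : Fin d → ℝ) : 0 ≤ y ⬝ᵥ y :=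
  Finset.sum_nonneg fun i _ => mul_self_nonneg (y i)

lemma sq_norm_le_dotProduct_self (y : Fin d → ℝ) : ‖y‖ ^ 2 ≤ y ⬝ᵥ y := by
  have hnorm : ‖y‖ ≤ √(y ⬝ᵥ y) := (pi_norm_le_iff_of_nonneg (Real.sqrt_nonneg _)).2 fun i => by
    rw [Real.norm_eq_abs]
    refine Real.abs_le_sqrt ?_
    rw [pow_two]
    exact Finset.single_le_sum (f := fun j => y j * y j) (fun j _ => mul_self_nonneg (y j))
      (Finset.mem_univ i)
  calc ‖y‖ ^ 2 ≤ √(y ⬝ᵥ y) ^ 2 := by gcongr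
    _ = y ⬝ᵥ y := Real.sq_sqrt (dotProduct_self_nonneg y)

lemma isCompact_segment {E : Type*} [AddCommGroup E] [Module ℝ E] [TopologicalSpace E]
    [IsTopologicalAddGroup E] [ContinuousSMul ℝ E] (x y : E) : IsCompact (segment ℝ x y) := by
  rw [segment_eq_image']
  exact isCompact_Icc.image (by fun_prop)

lemma traceHess_vecMulVec_of_quadratic (hφ : ContDiff ℝ 2 φ) {x : Fin d → ℝ} {α β γ : ℝ}
    (hquad : ∀ t : ℝ, φ (x + t • e) = α + β * t + γ * t ^ 2) :
    traceHess (vecMulVec e e) φ x = 2 * γ := by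
  have first : deriv (fun t : ℝ => α + β * t + γ * t ^ 2) = fun t => β + γ * (2 * t) := by
    ext t
    refine HasDerivAt.deriv (HasDerivAt.congr_deriv
      ((((hasDerivAt_id t).const_mul β).const_add α).add ((hasDerivAt_pow 2 t).const_mul γ)) ?_)
    simp
  have second : HasDerivAt (fun t : ℝ => β + γ * (2 * t)) (γ * (2 * 1)) 0 :=
    (((hasDerivAt_id 0).const_mul 2).const_mul γ).const_add β
  rw [traceHess_vecMulVec, ← deriv_deriv_comp_add_smul hφ, funext hquad, first, second.deriv]
  ring

/-- The component of `y - a` in `ker g`, for the splitting `ker g ⊕ ℝ e` of the space when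
`g e = 1`. -/
def offAxis (g : (Fin d → ℝ) →L[ℝ] ℝ) (a e y : Fin d → ℝ) : Fin d → ℝ :=
  y - a - g (y - a) • e

lemma contDiff_offAxis_dotProduct_self :
    ContDiff ℝ 2 fun y => offAxis g a e y ⬝ᵥ offAxis g a e y := by
  unfold offAxis dotProduct
  fun_prop

lemma offAxis_add_smul (hg : g e = 1) (y : Fin d → ℝ) (t : ℝ) :
    offAxis g a e (y + t • e) = offAxis g a e y := by
  have hsub : y + t • e - a = (y - a) + t • e := by abel
  simp only [offAxis, hsub, map_add, map_smul, hg, smul_eq_mul, mul_one, add_smul]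
  abel

lemma offAxis_self : offAxis g a e a = 0 := by simp [offAxis]

/-- The cylinder of radius `ρ` around the segment from `a` to `a + e`, with faces parallel to
`ker g`. -/
def segmentTube (g : (Fin d → ℝ) →L[ℝ] ℝ) (a e : Fin d → ℝ) (ρ : ℝ) : Set (Fin d → ℝ) :=
  {y | g (y - a) ∈ Icc 0 1 ∧ offAxis g a e y ⬝ᵥ offAxis g a e y ≤ ρ ^ 2}

lemma segmentTube_subset_cthickening {ρ : ℝ} (hρ : 0 ≤ ρ) :
    segmentTube g a e ρ ⊆ Metric.cthickening ρ (segment ℝ a (a + e)) := by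
  rintro y ⟨hs, hoff⟩
  have hmem : a + g (y - a) • e ∈ segment ℝ a (a + e) := by
    rw [segment_eq_image']
    exact ⟨_, hs, by simp⟩
  refine Metric.mem_cthickening_of_dist_le _ _ _ _ hmem ?_
  rw [dist_eq_norm, ← sub_sub]
  exact abs_le_of_sq_le_sq' ((sq_norm_le_dotProduct_self _).trans hoff) hρ |>.2

lemma isCompact_segmentTube {ρ : ℝ} (hρ : 0 ≤ ρ) : IsCompact (segmentTube g a e ρ) := by
  have hclosed : IsClosed (segmentTube g a e ρ) :=
    (isClosed_Icc.preimage (by fun_prop : Continuous fun y => g (y - a))).inter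
      (isClosed_le contDiff_offAxis_dotProduct_self.continuous continuous_const)
  exact Metric.isCompact_of_isClosed_isBounded hclosed
    ((isCompact_segment a (a + e)).isBounded.cthickening.subset (segmentTube_subset_cthickening hρ))

lemma exists_segmentTube_subset {W : Set (Fin d → ℝ)} (hW : IsOpen W)
    (hseg : segment ℝ a (a + e) ⊆ W) : ∃ ρ > 0, segmentTube g a e ρ ⊆ W := by
  obtain ⟨ρ, hρ, hsub⟩ := (isCompact_segment a (a + e)).exists_cthickening_subset_open hW hseg
  exact ⟨ρ, hρ, (segmentTube_subset_cthickening hρ.le).trans hsub⟩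

/-- A barrier on `segmentTube`, strictly concave along the axis and at least `C * ρ ^ 2` on the
lateral boundary. -/
def tubeBarrier (g : (Fin d → ℝ) →L[ℝ] ℝ) (a e : Fin d → ℝ) (ε C : ℝ) (y : Fin d → ℝ) : ℝ :=
  ε * (g (y - a) * (1 - g (y - a))) + C * (offAxis g a e y ⬝ᵥ offAxis g a e y)

lemma contDiff_tubeBarrier {ε C : ℝ} : ContDiff ℝ 2 (tubeBarrier g a e ε C) := by
  have hoff := contDiff_offAxis_dotProduct_self (g := g) (a := a) (e := e)
  have hs : ContDiff ℝ 2 fun y => g (y - a) := by fun_prop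
  exact (contDiff_const.mul (hs.mul (contDiff_const.sub hs))).add (contDiff_const.mul hoff)

lemma traceHess_tubeBarrier (hg : g e = 1) {ε C : ℝ} (y : Fin d → ℝ) :
    traceHess (vecMulVec e e) (tubeBarrier g a e ε C) y = 2 * (-ε) := by
  refine traceHess_vecMulVec_of_quadratic contDiff_tubeBarrier
    (α := tubeBarrier g a e ε C y) (β := ε * (1 - 2 * g (y - a))) fun t => ?_
  have hs : g (y + t • e - a) = g (y - a) + t := by
    rw [add_sub_right_comm, map_add, map_smul, hg, smul_eq_mul, mul_one]
  simp only [tubeBarrier, hs, offAxis_add_smul hg]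
  ring

lemma mul_sq_le_tubeBarrier {ρ ε C : ℝ} (hε : 0 ≤ ε) {y : Fin d → ℝ}
    (hy : g (y - a) ∈ Icc 0 1) (hlateral : offAxis g a e y ⬝ᵥ offAxis g a e y = ρ ^ 2) :
    C * ρ ^ 2 ≤ tubeBarrier g a e ε C y := by
  rw [tubeBarrier, hlateral]
  exact le_add_of_nonneg_left (mul_nonneg hε (mul_nonneg hy.1 (sub_nonneg.2 hy.2)))

lemma tubeBarrier_nonneg {ρ ε C : ℝ} (hε : 0 ≤ ε) (hC : 0 ≤ C) {y : Fin d → ℝ}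
    (hy : y ∈ segmentTube g a e ρ) : 0 ≤ tubeBarrier g a e ε C y :=
  add_nonneg (mul_nonneg hε (mul_nonneg hy.1.1 (sub_nonneg.2 hy.1.2)))
    (mul_nonneg hC (dotProduct_self_nonneg _))

lemma IsSubsolution.nonpos_on_axis_of_neg_on_faces (hu : IsSubsolution (vecMulVec e e) 0 V u)
    (husc : UpperSemicontinuousOn u V) (hg : g e = 1) {ρ : ℝ} (hρ : 0 < ρ)
    (hV : segmentTube g a e ρ ⊆ V)
    (hfaces : ∀ y ∈ segmentTube g a e ρ, g (y - a) = 0 ∨ g (y - a) = 1 → u y < 0)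
    {t : ℝ} (ht : t ∈ Icc (0 : ℝ) 1) : u (a + t • e) ≤ 0 := by
  have hs_axis : g (a + t • e - a) = t := by simp [hg]
  have hoff_axis : offAxis g a e (a + t • e) = 0 := by rw [offAxis_add_smul hg, offAxis_self]
  have hmem : a + t • e ∈ segmentTube g a e ρ := by
    refine ⟨by rwa [hs_axis], ?_⟩
    rw [hoff_axis, zero_dotProduct]
    positivity
  let O : Set (Fin d → ℝ) := {y | g (y - a) ∈ Ioo 0 1 ∧ offAxis g a e y ⬝ᵥ offAxis g a e y < ρ ^ 2}
  have hO : IsOpen O :=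
    (isOpen_Ioo.preimage (by fun_prop : Continuous fun y => g (y - a))).inter
      (isOpen_lt contDiff_offAxis_dotProduct_self.continuous continuous_const)
  have hOtube : O ⊆ segmentTube g a e ρ := fun y hy => ⟨Ioo_subset_Icc_self hy.1, hy.2.le⟩
  have hcompact := isCompact_segmentTube (g := g) (a := a) (e := e) hρ.le
  obtain ⟨m, -, hm⟩ := (husc.mono hV).exists_isMaxOn ⟨_, hmem⟩ hcompact
  refine le_of_forall_pos_le_add fun ε hε => ?_
  have hbdry : ∀ z ∈ segmentTube g a e ρ \ O, u z ≤ tubeBarrier g a e ε (|u m| / ρ ^ 2) z := by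
    rintro z ⟨hz, hzO⟩
    by_cases hface : g (z - a) = 0 ∨ g (z - a) = 1
    · exact (hfaces z hz hface).le.trans (tubeBarrier_nonneg hε.le (by positivity) hz)
    · push Not at hface
      have hlateral : offAxis g a e z ⬝ᵥ offAxis g a e z = ρ ^ 2 := hz.2.eq_of_not_lt fun hlt =>
        hzO ⟨⟨hz.1.1.lt_of_ne' hface.1, hz.1.2.lt_of_ne hface.2⟩, hlt⟩
      calc u z ≤ |u m| := (hm hz).trans (le_abs_self _)
        _ = |u m| / ρ ^ 2 * ρ ^ 2 := by field_simp
        _ ≤ _ := mul_sq_le_tubeBarrier hε.le hz.1 hlateral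
  calc u (a + t • e)
      ≤ tubeBarrier g a e ε (|u m| / ρ ^ 2) (a + t • e) :=
        (hu.mono_set (hOtube.trans hV)).le_of_le_on_diff hO hcompact hOtube (husc.mono hV)
          contDiff_tubeBarrier (fun z _ => by rw [traceHess_tubeBarrier hg]; linarith) hbdry _ hmem
    _ = ε * (t * (1 - t)) := by
        rw [tubeBarrier, hs_axis, hoff_axis, zero_dotProduct, mul_zero, add_zero]
    _ ≤ ε * 1 := by gcongr; nlinarith [ht.1, ht.2]
    _ = 0 + ε := by ring

lemma IsSubsolution.nonpos_of_mem_segment (hu : IsSubsolution (vecMulVec e e) 0 V u)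
    (hV : IsOpen V) (husc : UpperSemicontinuousOn u V) (he : e ≠ 0)
    (hseg : segment ℝ a (a + e) ⊆ V) (ha : u a < 0) (hb : u (a + e) < 0)
    {t : ℝ} (ht : t ∈ Icc (0 : ℝ) 1) : u (a + t • e) ≤ 0 := by
  obtain ⟨g, hg⟩ : ∃ g : (Fin d → ℝ) →L[ℝ] ℝ, g e = 1 := SeparatingDual.exists_eq_one he
  let W : Set (Fin d → ℝ) := (V ∩ {y | u y < 0}) ∪ (V ∩ {y | g (y - a) ∈ Ioo 0 1})
  have hW : IsOpen W := by
    have hneg : IsOpen (V ∩ {y | u y < 0}) := by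
      rw [isOpen_iff_mem_nhds]
      rintro y ⟨hyV, hy⟩
      have hlt := husc y hyV 0 hy
      rw [hV.nhdsWithin_eq hyV] at hlt
      exact inter_mem (hV.mem_nhds hyV) hlt
    exact hneg.union
      (hV.inter (isOpen_Ioo.preimage (by fun_prop : Continuous fun y => g (y - a))))
  have hsegW : segment ℝ a (a + e) ⊆ W := by
    intro y hy
    have hyV := hseg hy
    rw [segment_eq_image'] at hy
    obtain ⟨τ, hτ, rfl⟩ := hy
    rw [add_sub_cancel_left] at hyV ⊢
    rcases hτ.1.eq_or_lt with rfl | h0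
    · exact Or.inl ⟨hyV, by simpa using ha⟩
    rcases hτ.2.eq_or_lt with rfl | h1
    · exact Or.inl ⟨hyV, by simpa using hb⟩
    · exact Or.inr ⟨hyV, by simp [hg, h0, h1]⟩
  obtain ⟨ρ, hρ, htube⟩ := exists_segmentTube_subset (g := g) hW hsegW
  refine hu.nonpos_on_axis_of_neg_on_faces husc hg hρ
    (htube.trans (union_subset inter_subset_left inter_subset_left)) (fun y hy hface => ?_) ht
  rcases htube hy with ⟨-, hneg⟩ | ⟨-, hpos, hlt⟩
  · exact hneg
  · rcases hface with h | h <;> linarith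

lemma convexOn_of_isSubsolution_vecMulVec (hV : IsOpen V) (hconv : Convex ℝ V)
    (husc : UpperSemicontinuousOn u V) (hu : ∀ e, IsSubsolution (vecMulVec e e) 0 V u) :
    ConvexOn ℝ V u := by
  refine ⟨hconv, fun x hx y hy α β hα hβ hαβ => ?_⟩
  obtain rfl : α = 1 - β := eq_sub_of_add_eq hαβ
  obtain rfl | hxy := eq_or_ne y x
  · rw [← add_smul, ← add_smul, hαβ, one_smul, one_smul]
  obtain ⟨g, hg⟩ : ∃ g : (Fin d → ℝ) →L[ℝ] ℝ, g (y - x) = 1 :=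
    SeparatingDual.exists_eq_one (sub_ne_zero.2 hxy)
  refine le_of_forall_pos_le_add fun ε hε => ?_
  let ℓ : (Fin d → ℝ) → ℝ := fun z => -(u x + ε + (u y - u x) * g (z - x))
  have hℓ : ContDiff ℝ 2 ℓ := by fun_prop
  have hℓ_flat (z : Fin d → ℝ) : traceHess (vecMulVec (y - x) (y - x)) ℓ z = 2 * 0 := by
    refine traceHess_vecMulVec_of_quadratic hℓ (α := ℓ z) (β := -(u y - u x)) fun t => ?_
    have hgz : g (z + t • (y - x) - x) = g (z - x) + t := by
      rw [add_sub_right_comm, map_add, map_smul, hg, smul_eq_mul, mul_one]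
    simp only [ℓ, hgz]
    ring
  have hsub : IsSubsolution (vecMulVec (y - x) (y - x)) 0 V fun z => u z + ℓ z :=
    (hu (y - x)).add_contDiff hℓ fun z _ => by simp [hℓ_flat]
  have hsegment := hsub.nonpos_of_mem_segment (a := x) (t := β) hV
    (husc.add hℓ.continuous.continuousOn.upperSemicontinuousOn) (sub_ne_zero.2 hxy)
    (by simpa using hconv.segment_subset hx hy) (by simp [ℓ, hε])
    (by simp only [ℓ, add_sub_cancel, hg]; linarith) ⟨hβ, by linarith⟩
  have hpoint : x + β • (y - x) = (1 - β) • x + β • y := by module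
  have hgβ : g (x + β • (y - x) - x) = β := by simp [hg]
  simp only [ℓ, hgβ] at hsegment
  rw [hpoint] at hsegment
  rw [smul_eq_mul, smul_eq_mul]
  linarith

lemma inv_smul_vecMulVec_mem_S1set (he : e ≠ 0) : (e ⬝ᵥ e)⁻¹ • vecMulVec e e ∈ S1set d := by
  have hpsd : (vecMulVec e e).PosSemidef := by
    simpa using Matrix.posSemidef_vecMulVec_self_star e
  refine ⟨hpsd.smul (inv_nonneg.2 (dotProduct_self_nonneg e)), ?_⟩
  rw [Matrix.trace_smul, Matrix.trace_vecMulVec, smul_eq_mul,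
    inv_mul_cancel₀ (dotProduct_self_eq_zero.not.2 he)]

lemma contDiff_dotProduct_self : ContDiff ℝ 2 fun y : Fin d → ℝ => y ⬝ᵥ y := by
  unfold dotProduct
  fun_prop

lemma continuousOn_of_isSubsolution {C : ℝ} (hV : IsOpen V) (hconv : Convex ℝ V)
    (husc : UpperSemicontinuousOn u V) (hu : ∀ B ∈ S1set d, IsSubsolution B (-C) V u) :
    ContinuousOn u V := by
  let ψ : (Fin d → ℝ) → ℝ := fun y => C / 2 * (y ⬝ᵥ y)
  have hψ : ContDiff ℝ 2 ψ := contDiff_const.mul contDiff_dotProduct_self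
  have hψ_hess (e z : Fin d → ℝ) : traceHess (vecMulVec e e) ψ z = 2 * (C / 2 * (e ⬝ᵥ e)) := by
    refine traceHess_vecMulVec_of_quadratic hψ (α := ψ z) (β := C * (z ⬝ᵥ e)) fun t => ?_
    simp only [ψ, add_dotProduct, dotProduct_add, smul_dotProduct, dotProduct_smul, smul_eq_mul,
      dotProduct_comm e z]
    ring
  have hrank (e : Fin d → ℝ) : IsSubsolution (vecMulVec e e) (e ⬝ᵥ e * -C) V u := by
    obtain rfl | he := eq_or_ne e 0
    · intro φ _ z _ _
      simp [traceHess]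
    · have hpos : 0 ≤ e ⬝ᵥ e := dotProduct_self_nonneg e
      simpa [smul_smul, mul_inv_cancel₀ (dotProduct_self_eq_zero.not.2 he)] using
        (hu _ (inv_smul_vecMulVec_mem_S1set he)).smul_left hpos
  have hconvex : ConvexOn ℝ V fun y => u y + ψ y :=
    convexOn_of_isSubsolution_vecMulVec hV hconv
      (husc.add hψ.continuous.continuousOn.upperSemicontinuousOn) fun e =>
        (hrank e).add_contDiff hψ fun z _ => by rw [hψ_hess]; linarith
  exact ((hconvex.continuousOn hV).sub hψ.continuous.continuousOn).congr fun y _ => by simp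

end Convexity

section Polynomials

open MvPolynomial

variable {σ R : Type*} [CommSemiring R]

lemma totalDegree_pderiv_le (p : MvPolynomial σ R) (i : σ) :
    (pderiv i p).totalDegree ≤ p.totalDegree - 1 := by
  refine Finset.sup_le fun m hm => ?_
  rw [mem_support_iff, coeff_pderiv] at hm
  have hle := le_totalDegree (mem_support_iff.2 (left_ne_zero_of_mul hm))
  rw [Finsupp.sum_add_index' (by simp) (by simp), Finsupp.sum_single_index rfl] at hle
  exact Nat.le_sub_of_add_le hle

variable [Fintype σ]

/-- The operator `∑ B i j ∂ᵢ∂ⱼ` on polynomials. -/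
noncomputable def polyTraceHess (B : Matrix σ σ R) : MvPolynomial σ R →ₗ[R] MvPolynomial σ R :=
  ∑ i, ∑ j, B i j • ((pderiv j).toLinearMap ∘ₗ (pderiv i).toLinearMap)

lemma polyTraceHess_apply (B : Matrix σ σ R) (p : MvPolynomial σ R) :
    polyTraceHess B p = ∑ i, ∑ j, B i j • pderiv j (pderiv i p) := by
  simp [polyTraceHess, LinearMap.sum_apply]

lemma totalDegree_polyTraceHess_le (B : Matrix σ σ R) (p : MvPolynomial σ R) :
    (polyTraceHess B p).totalDegree ≤ p.totalDegree - 2 := by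
  rw [polyTraceHess_apply]
  refine totalDegree_finsetSum_le fun i _ => totalDegree_finsetSum_le fun j _ => ?_
  have hfirst := totalDegree_pderiv_le p i
  have hsecond := totalDegree_pderiv_le (pderiv i p) j
  exact (totalDegree_smul_le _ _).trans (by lia)

/-- The polynomial `|x|²`. -/
noncomputable def normSqPoly (σ R : Type*) [Fintype σ] [CommSemiring R] : MvPolynomial σ R :=
  ∑ i, X i ^ 2

lemma eval_normSqPoly (x : σ → R) : eval x (normSqPoly σ R) = x ⬝ᵥ x := by
  simp [normSqPoly, dotProduct, pow_two]

lemma totalDegree_one_sub_normSqPoly_le {R : Type*} [CommRing R] :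
    (1 - normSqPoly σ R).totalDegree ≤ 2 :=
  (totalDegree_sub _ _).trans <| max_le (by simp) <|
    totalDegree_finsetSum_le fun i _ => (isHomogeneous_X_pow i 2).totalDegree_le

lemma polyTraceHess_normSqPoly (B : Matrix σ σ R) :
    polyTraceHess B (normSqPoly σ R) = C (2 * B.trace) := by
  classical
  have hgrad (i : σ) : pderiv i (normSqPoly σ R) = C 2 * X i := by
    simp [normSqPoly, pderiv_X, Pi.single_apply, map_ofNat C 2]
  simp [polyTraceHess_apply, hgrad, pderiv_X, Pi.single_apply, Matrix.trace, smul_eq_C_mul,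
    Finset.mul_sum, mul_comm]

end Polynomials

section PolynomialHessian

open MvPolynomial

variable {d : ℕ}

lemma contDiff_eval {n : WithTop ℕ∞} (p : MvPolynomial (Fin d) ℝ) :
    ContDiff ℝ n fun x : Fin d → ℝ => eval x p :=
  (AnalyticOnNhd.eval_mvPolynomial p).contDiff

lemma fderiv_eval_single (p : MvPolynomial (Fin d) ℝ) (x : Fin d → ℝ) (j : Fin d) :
    fderiv ℝ (fun x : Fin d → ℝ => eval x p) x (Pi.single j 1) = eval x (pderiv j p) := by
  have hdiff (p : MvPolynomial (Fin d) ℝ) : DifferentiableAt ℝ (fun x => eval x p) x :=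
    (contDiff_eval (n := 1) p).differentiable one_ne_zero x
  induction p using MvPolynomial.induction_on with
  | C a => simp
  | add p q hp hq =>
    simp only [map_add]
    rw [fderiv_fun_add (hdiff p) (hdiff q), _root_.add_apply, hp, hq]
  | mul_X p i hp =>
    have hcoord : fderiv ℝ (fun x : Fin d → ℝ => x i) x = ContinuousLinearMap.proj i :=
      (ContinuousLinearMap.proj (R := ℝ) (φ := fun _ : Fin d => ℝ) i).fderiv
    simp only [map_mul, eval_X]
    rw [fderiv_fun_mul (hdiff p) (differentiableAt_apply i x), hcoord, pderiv_mul]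
    by_cases hij : i = j
    · subst hij
      simp only [_root_.add_apply, _root_.smul_apply, ContinuousLinearMap.proj_apply,
        Pi.single_eq_same, smul_eq_mul, mul_one, hp, pderiv_X, map_add, map_mul, eval_X]
      ring
    · simp only [_root_.add_apply, _root_.smul_apply, ContinuousLinearMap.proj_apply, ne_eq, hij,
        not_false_eq_true, Pi.single_eq_of_ne, smul_eq_mul, mul_zero, hp, zero_add, pderiv_X,
        add_zero, map_mul, eval_X]
      ring

lemma traceHess_eval (B : Matrix (Fin d) (Fin d) ℝ) (p : MvPolynomial (Fin d) ℝ)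
    (x : Fin d → ℝ) : traceHess B (fun y => eval y p) x = eval x (polyTraceHess B p) := by
  have hdiff : Differentiable ℝ (fderiv ℝ fun y : Fin d → ℝ => eval y p) :=
    ((contDiff_eval (n := 2) p).fderiv_right (m := 1) le_rfl).differentiable one_ne_zero
  have hsnd (i j : Fin d) :
      fderiv ℝ (fderiv ℝ fun y : Fin d → ℝ => eval y p) x (Pi.single j 1) (Pi.single i 1) =
        eval x (pderiv j (pderiv i p)) := by
    rw [← fderiv_eval_single, ← funext fun y => fderiv_eval_single p y i,
      fderiv_clm_apply (hdiff x) (by fun_prop)]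
    simp
  simp [traceHess_eq_sum, polyTraceHess_apply, hsnd, smul_eval]

lemma traceHess_dotProduct_self (B : Matrix (Fin d) (Fin d) ℝ) (x : Fin d → ℝ) :
    traceHess B (fun y => y ⬝ᵥ y) x = 2 * B.trace := by
  simpa [eval_normSqPoly, polyTraceHess_normSqPoly] using traceHess_eval B (normSqPoly (Fin d) ℝ) x

lemma traceHess_one_sub_dotProduct_self (B : Matrix (Fin d) (Fin d) ℝ) (x : Fin d → ℝ) :
    traceHess B (fun y => 1 - y ⬝ᵥ y) x = -(2 * B.trace) := by
  rw [traceHess_sub contDiff_const contDiff_dotProduct_self, traceHess_const,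
    traceHess_dotProduct_self, zero_sub]

end PolynomialHessian

section DirichletProblem

open MvPolynomial

variable {d : ℕ} {B : Matrix (Fin d) (Fin d) ℝ} {u h : (Fin d → ℝ) → ℝ}

/-- The open Euclidean unit ball; the norm of `Fin d → ℝ` is the supremum norm. -/
def openUnitBall (d : ℕ) : Set (Fin d → ℝ) := {y | y ⬝ᵥ y < 1}

/-- The closed Euclidean unit ball. -/
def closedUnitBall (d : ℕ) : Set (Fin d → ℝ) := {y | y ⬝ᵥ y ≤ 1}

/-- The Euclidean unit sphere. -/
def unitSphere (d : ℕ) : Set (Fin d → ℝ) := {y | y ⬝ᵥ y = 1}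

lemma isOpen_openUnitBall : IsOpen (openUnitBall d) :=
  isOpen_lt contDiff_dotProduct_self.continuous continuous_const

lemma openUnitBall_subset_closedUnitBall : openUnitBall d ⊆ closedUnitBall d :=
  fun y (hy : y ⬝ᵥ y < 1) => hy.le

lemma isCompact_closedUnitBall : IsCompact (closedUnitBall d) := by
  refine Metric.isCompact_of_isClosed_isBounded
    (isClosed_le contDiff_dotProduct_self.continuous continuous_const)
    (Metric.isBounded_closedBall (x := 0) (r := 1) |>.subset fun y hy => ?_)
  rw [mem_closedBall_zero_iff, ← sq_le_one_iff₀ (norm_nonneg y)]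
  exact (sq_norm_le_dotProduct_self y).trans hy

instance : CompactSpace (unitSphere d) :=
  isCompact_iff_compactSpace.1 <| isCompact_closedUnitBall.of_isClosed_subset
    (isClosed_eq contDiff_dotProduct_self.continuous continuous_const) fun _ hy => le_of_eq hy

lemma zero_mem_closedUnitBall : (0 : Fin d → ℝ) ∈ closedUnitBall d := by simp [closedUnitBall]

lemma IsSubsolution.le_of_le_on_unitSphere (hu : IsSubsolution B 0 (openUnitBall d) u)
    (husc : UpperSemicontinuousOn u (closedUnitBall d)) (hB : 0 < B.trace) (hh : ContDiff ℝ 2 h)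
    (hharm : ∀ z ∈ openUnitBall d, traceHess B h z ≤ 0) (hle : ∀ z ∈ unitSphere d, u z ≤ h z) :
    ∀ z ∈ closedUnitBall d, u z ≤ h z := by
  intro z hz
  refine le_of_forall_pos_le_add fun ε hε => ?_
  have hψ : ContDiff ℝ 2 fun y : Fin d → ℝ => 1 - y ⬝ᵥ y :=
    contDiff_const.sub contDiff_dotProduct_self
  have hbarrier (y : Fin d → ℝ) (hy : y ∈ openUnitBall d) :
      traceHess B (fun y => h y + ε * (1 - y ⬝ᵥ y)) y < 0 := by
    rw [traceHess_add hh (contDiff_const.mul hψ), traceHess_const_mul hψ,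
      traceHess_one_sub_dotProduct_self]
    nlinarith [hharm y hy, mul_pos hε hB]
  have hle_barrier := hu.le_of_le_on_diff isOpen_openUnitBall isCompact_closedUnitBall
    openUnitBall_subset_closedUnitBall husc (hh.add (contDiff_const.mul hψ)) hbarrier
    (fun y hy => by
      have hy1 : y ⬝ᵥ y = 1 := hy.1.eq_of_not_lt hy.2
      simpa [hy1] using hle y hy1) z hz
  nlinarith [dotProduct_self_nonneg z]

lemma eval_eq_zero_of_polyTraceHess_eq_zero (hB : B.PosSemidef) (htr : 0 < B.trace)
    {p : MvPolynomial (Fin d) ℝ} (hp : polyTraceHess B p = 0)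
    (hzero : ∀ y ∈ unitSphere d, eval y p = 0) {y : Fin d → ℝ} (hy : y ∈ closedUnitBall d) :
    eval y p = 0 := by
  have hnonpos {q : MvPolynomial (Fin d) ℝ} (hq : polyTraceHess B q = 0)
      (hqzero : ∀ y ∈ unitSphere d, eval y q = 0) : eval y q ≤ 0 := by
    have hsub : IsSubsolution B 0 (openUnitBall d) fun y => eval y q :=
      .of_contDiff hB (contDiff_eval q) fun z _ => by simp [traceHess_eval, hq]
    exact hsub.le_of_le_on_unitSphere (h := fun _ => 0)
      (continuous_eval q).continuousOn.upperSemicontinuousOn htr contDiff_const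
      (fun z _ => (traceHess_const 0).le) (fun z hz => (hqzero z hz).le) y hy
  refine le_antisymm (hnonpos hp hzero) ?_
  simpa using hnonpos (q := -p) (by rw [map_neg, hp, neg_zero]) fun z hz => by simp [hzero z hz]

/-- The map `q ↦ B : D²((1 - |x|²) q)`. It preserves the degree filtration, so its bijectivity is
solvability of the Poisson problem with zero boundary values on the unit ball. -/
noncomputable def poissonOp (B : Matrix (Fin d) (Fin d) ℝ) :
    MvPolynomial (Fin d) ℝ →ₗ[ℝ] MvPolynomial (Fin d) ℝ :=
  polyTraceHess B ∘ₗ LinearMap.mulLeft ℝ (1 - normSqPoly (Fin d) ℝ)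

lemma poissonOp_apply (q : MvPolynomial (Fin d) ℝ) :
    poissonOp B q = polyTraceHess B ((1 - normSqPoly (Fin d) ℝ) * q) := rfl

lemma totalDegree_poissonOp_le (q : MvPolynomial (Fin d) ℝ) :
    (poissonOp B q).totalDegree ≤ q.totalDegree := by
  have hmul := totalDegree_mul (1 - normSqPoly (Fin d) ℝ) q
  have hquad := totalDegree_one_sub_normSqPoly_le (σ := Fin d) (R := ℝ)
  have hop := totalDegree_polyTraceHess_le B ((1 - normSqPoly (Fin d) ℝ) * q)
  rw [poissonOp_apply]
  lia

lemma eq_zero_of_eval_eq_zero_on_openUnitBall {q : MvPolynomial (Fin d) ℝ}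
    (hq : ∀ y ∈ openUnitBall d, eval y q = 0) : q = 0 := by
  refine funext_set (fun _ => Icc (0 : ℝ) (1 / (d + 1))) (fun _ => Icc_infinite (by positivity))
    fun y hy => ?_
  rw [hq y ?_, map_zero]
  have hcoord (i : Fin d) : y i ∈ Icc (0 : ℝ) (1 / (d + 1)) := hy i (mem_univ i)
  calc y ⬝ᵥ y ≤ ∑ _i : Fin d, (1 / (d + 1) : ℝ) * (1 / (d + 1)) := Finset.sum_le_sum fun i _ =>
        mul_le_mul (hcoord i).2 (hcoord i).2 (hcoord i).1 (by positivity)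
    _ = d / (d + 1) * (1 / (d + 1)) := by simp; ring
    _ < 1 := by
      rw [div_mul_div_comm, div_lt_one (by positivity)]
      nlinarith

lemma poissonOp_injective (hB : B.PosSemidef) (htr : 0 < B.trace) :
    Function.Injective (poissonOp B) := by
  rw [injective_iff_map_eq_zero]
  intro q hq
  refine eq_zero_of_eval_eq_zero_on_openUnitBall fun y hy => ?_
  have hprod : (1 - y ⬝ᵥ y) * eval y q = 0 := by
    simpa [eval_normSqPoly] using eval_eq_zero_of_polyTraceHess_eq_zero hB htr hq
      (fun z (hz : z ⬝ᵥ z = 1) => by simp [eval_normSqPoly, hz])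
        (openUnitBall_subset_closedUnitBall hy)
  exact (mul_eq_zero.1 hprod).resolve_left (sub_pos.2 hy).ne'

lemma poissonOp_surjective (hB : B.PosSemidef) (htr : 0 < B.trace) :
    Function.Surjective (poissonOp B) := by
  intro p
  let V := restrictTotalDegree (Fin d) ℝ p.totalDegree
  have hV : ∀ q ∈ V, poissonOp B q ∈ V := fun q hq => by
    rw [mem_restrictTotalDegree] at hq ⊢
    exact (totalDegree_poissonOp_le q).trans hq
  have hinj : Function.Injective ((poissonOp B).restrict hV) := fun a b hab =>
    Subtype.ext (poissonOp_injective hB htr (congrArg Subtype.val hab))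
  obtain ⟨q, hq⟩ := LinearMap.injective_iff_surjective.1 hinj
    ⟨p, (mem_restrictTotalDegree _ _ _).2 le_rfl⟩
  exact ⟨q, congrArg Subtype.val hq⟩

lemma exists_dirichletSolution (hB : B.PosSemidef) (htr : 0 < B.trace) :
    ∃ S : MvPolynomial (Fin d) ℝ →ₗ[ℝ] MvPolynomial (Fin d) ℝ, ∀ p,
      polyTraceHess B (S p) = 0 ∧ ∀ y ∈ unitSphere d, eval y (S p) = eval y p := by
  let T := LinearEquiv.ofBijective (poissonOp B)
    ⟨poissonOp_injective hB htr, poissonOp_surjective hB htr⟩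
  refine ⟨LinearMap.id - LinearMap.mulLeft ℝ (1 - normSqPoly (Fin d) ℝ) ∘ₗ
    T.symm.toLinearMap ∘ₗ polyTraceHess B, fun p => ⟨?_, fun y (hy : y ⬝ᵥ y = 1) => ?_⟩⟩
  · have hT : poissonOp B (T.symm (polyTraceHess B p)) = polyTraceHess B p :=
      T.apply_symm_apply _
    rw [poissonOp_apply] at hT
    simp [hT]
  · simp [eval_normSqPoly, hy]

end DirichletProblem

section HarmonicFunctional

open MvPolynomial

variable {d : ℕ} {B : Matrix (Fin d) (Fin d) ℝ}

/-- Restriction of polynomials to the unit sphere. -/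
noncomputable def polyToSphere (d : ℕ) : MvPolynomial (Fin d) ℝ →ₐ[ℝ] C(unitSphere d, ℝ) :=
  aeval fun i => ⟨fun y => y.1 i, (continuous_apply i).comp continuous_subtype_val⟩

lemma polyToSphere_apply (p : MvPolynomial (Fin d) ℝ) (y : unitSphere d) :
    polyToSphere d p y = eval y.1 p := by
  induction p using MvPolynomial.induction_on with
  | C a => simp [polyToSphere]
  | add p q hp hq => simp [hp, hq]
  | mul_X p i hp =>
    rw [map_mul, ContinuousMap.mul_apply, hp]
    simp [polyToSphere]

lemma denseRange_polyToSphere : DenseRange (polyToSphere d) := by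
  have hsep : (polyToSphere d).range.SeparatesPoints := fun x y hxy => by
    obtain ⟨i, hi⟩ := Function.ne_iff.1 fun h => hxy (Subtype.ext h)
    exact ⟨_, ⟨_, ⟨X i, rfl⟩, rfl⟩, by simpa [polyToSphere] using hi⟩
  have htop := ContinuousMap.subalgebra_topologicalClosure_eq_top_of_separatesPoints _ hsep
  intro w
  have hw : w ∈ (polyToSphere d).range.topologicalClosure := htop ▸ Algebra.mem_top
  exact hw

/-- `Λ` dominates `B`-subharmonic functions at the centre of the unit ball by their boundary
values; this characterises integration against the `B`-harmonic measure of the centre. -/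
def IsHarmonicFunctional (B : Matrix (Fin d) (Fin d) ℝ) (Λ : C(unitSphere d, ℝ) →L[ℝ] ℝ) : Prop :=
  ∀ w : C(Fin d → ℝ, ℝ), IsSubsolution B 0 (openUnitBall d) w → w 0 ≤ Λ (w.restrict (unitSphere d))

lemma le_eval_zero_add_norm (htr : 0 < B.trace) {w : C(Fin d → ℝ, ℝ)}
    (hw : IsSubsolution B 0 (openUnitBall d) w) {p h : MvPolynomial (Fin d) ℝ}
    (hharm : polyTraceHess B h = 0) (hbdry : ∀ y ∈ unitSphere d, eval y h = eval y p) :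
    w 0 ≤ eval 0 h + ‖w.restrict (unitSphere d) - polyToSphere d p‖ := by
  refine hw.le_of_le_on_unitSphere
    (h := fun y => eval y h + ‖w.restrict (unitSphere d) - polyToSphere d p‖)
    w.continuous.continuousOn.upperSemicontinuousOn htr
    ((contDiff_eval h).add contDiff_const) (fun z _ => ?_) (fun z hz => ?_) 0
    zero_mem_closedUnitBall
  · rw [traceHess_add (contDiff_eval h) contDiff_const, traceHess_eval, hharm,
      traceHess_const, map_zero, add_zero]
  · have hdiff := (w.restrict (unitSphere d) - polyToSphere d p).norm_coe_le_norm ⟨z, hz⟩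
    rw [ContinuousMap.sub_apply, polyToSphere_apply, ContinuousMap.restrict_apply] at hdiff
    rw [hbdry z hz]
    linarith [(le_abs_self _).trans hdiff]

lemma abs_eval_zero_le_norm (hB : B.PosSemidef) (htr : 0 < B.trace)
    {p h : MvPolynomial (Fin d) ℝ} (hharm : polyTraceHess B h = 0)
    (hbdry : ∀ y ∈ unitSphere d, eval y h = eval y p) : |eval 0 h| ≤ ‖polyToSphere d p‖ := by
  have hle {q g : MvPolynomial (Fin d) ℝ} (hg : polyTraceHess B g = 0)
      (hgq : ∀ y ∈ unitSphere d, eval y g = eval y q) : eval 0 g ≤ ‖polyToSphere d q‖ := by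
    have hsub : IsSubsolution B 0 (openUnitBall d) fun y => eval y g :=
      .of_contDiff hB (contDiff_eval g) fun z _ => by simp [traceHess_eval, hg]
    have hrestrict : (⟨fun y => eval y g, continuous_eval g⟩ : C(Fin d → ℝ, ℝ)).restrict
        (unitSphere d) = polyToSphere d q := by
      ext y
      simpa [polyToSphere_apply] using hgq y y.2
    simpa [hrestrict] using le_eval_zero_add_norm (w := ⟨_, continuous_eval g⟩) (p := 0) (h := 0)
      htr hsub (map_zero _) fun _ _ => rfl
  refine abs_le.2 ⟨neg_le.1 ?_, hle hharm hbdry⟩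
  simpa using hle (q := -p) (g := -h) (by rw [map_neg, hharm, neg_zero])
    fun y hy => by simp [hbdry y hy]

lemma exists_isHarmonicFunctional (hB : B.PosSemidef) (htr : 0 < B.trace) :
    ∃ Λ, IsHarmonicFunctional B Λ := by
  obtain ⟨S, hS⟩ := exists_dirichletSolution hB htr
  let lam : MvPolynomial (Fin d) ℝ →ₗ[ℝ] ℝ := (aeval (0 : Fin d → ℝ)).toLinearMap ∘ₗ S
  have hlam (p : MvPolynomial (Fin d) ℝ) : lam p = eval 0 (S p) := by
    simp [lam, MvPolynomial.aeval_eq_eval]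
  have hbound (p : MvPolynomial (Fin d) ℝ) : ‖lam p‖ ≤ 1 * ‖(polyToSphere d).toLinearMap p‖ := by
    rw [hlam, one_mul]
    exact abs_eval_zero_le_norm hB htr (hS p).1 (hS p).2
  have hdense : DenseRange (polyToSphere d).toLinearMap := denseRange_polyToSphere
  refine ⟨lam.extendOfNorm (polyToSphere d).toLinearMap, fun w hw => ?_⟩
  set Λ := lam.extendOfNorm (polyToSphere d).toLinearMap
  have hΛpoly (p : MvPolynomial (Fin d) ℝ) : Λ (polyToSphere d p) = lam p :=
    LinearMap.extendOfNorm_eq hdense ⟨1, hbound⟩ p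
  refine le_of_forall_pos_le_add fun ε hε => ?_
  obtain ⟨p, hp⟩ :=
    Metric.denseRange_iff.1 hdense (w.restrict (unitSphere d)) (ε / 2) (by positivity)
  replace hp : ‖w.restrict (unitSphere d) - polyToSphere d p‖ < ε / 2 := by
    simpa [dist_eq_norm] using hp
  have hw0 := le_eval_zero_add_norm htr hw (hS p).1 (hS p).2
  have hΛ : |Λ (w.restrict (unitSphere d) - polyToSphere d p)| ≤
      1 * ‖w.restrict (unitSphere d) - polyToSphere d p‖ :=
    LinearMap.norm_extendOfNorm_apply_le hdense 1 hbound _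
  rw [map_sub, hΛpoly, hlam, one_mul, abs_le] at hΛ
  linarith [hΛ.1]

end HarmonicFunctional

section MeanValue

variable {d : ℕ} {B : Matrix (Fin d) (Fin d) ℝ} {Λ : C(unitSphere d, ℝ) →L[ℝ] ℝ}
  {c : ℝ} {V : Set (Fin d → ℝ)} {x : Fin d → ℝ}

/-- The values of `u` on the Euclidean sphere of centre `x` and radius `r`, transported to the unit
sphere. -/
def sphereValues (u : C(Fin d → ℝ, ℝ)) (x : Fin d → ℝ) (r : ℝ) : C(unitSphere d, ℝ) where
  toFun y := u (x + r • y.1)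
  continuous_toFun :=
    u.continuous.comp (continuous_const.add (continuous_subtype_val.const_smul r))

lemma IsHarmonicFunctional.le_apply_sphereValues (hΛ : IsHarmonicFunctional B Λ)
    (htr : B.trace = 1) {u : C(Fin d → ℝ, ℝ)} (hu : IsSubsolution B c V u) {r : ℝ} (hr : r ≠ 0)
    (hV : ∀ y ∈ openUnitBall d, x + r • y ∈ V) :
    u x + c * r ^ 2 / 2 ≤ Λ (sphereValues u x r) := by
  -- Adding this paraboloid, which vanishes on the sphere, cancels the right-hand side `c`.
  let ψ : (Fin d → ℝ) → ℝ := fun y => c * r ^ 2 / 2 * (1 - y ⬝ᵥ y)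
  have hψ : ContDiff ℝ 2 ψ := contDiff_const.mul (contDiff_const.sub contDiff_dotProduct_self)
  have hψtrace (y : Fin d → ℝ) : traceHess B ψ y = -(r ^ 2 * c) := by
    rw [traceHess_const_mul (contDiff_const.sub contDiff_dotProduct_self),
      traceHess_one_sub_dotProduct_self, htr]
    ring
  let w : C(Fin d → ℝ, ℝ) := ⟨fun y => u (x + r • y) + ψ y, by have := hψ.continuous; fun_prop⟩
  have hw : IsSubsolution B 0 (openUnitBall d) w :=
    ((hu.comp_add_smul x hr).mono_set hV).add_contDiff hψ fun z _ => by rw [hψtrace, add_neg_cancel]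
  have hwsphere : w.restrict (unitSphere d) = sphereValues u x r := by
    ext ⟨y, hy⟩
    have hy1 : y ⬝ᵥ y = 1 := hy
    simp [w, ψ, hy1, sphereValues]
  have hw0 : w 0 = u x + c * r ^ 2 / 2 := by simp [w, ψ]
  rw [← hwsphere, ← hw0]
  exact hΛ w hw

lemma eventually_forall_add_smul_mem {K : Set (Fin d → ℝ)} (hK : IsCompact K) (hV : IsOpen V)
    (hKV : K ⊆ V) : ∀ᶠ r : ℝ in 𝓝[>] 0, ∀ z ∈ K, ∀ y ∈ openUnitBall d, z + r • y ∈ V := by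
  obtain ⟨δ, hδ, hsub⟩ := hK.exists_cthickening_subset_open hV hKV
  filter_upwards [Ioo_mem_nhdsGT hδ] with r hr z hz y hy
  refine hsub (Metric.mem_cthickening_of_dist_le _ z δ K hz ?_)
  have hy1 : ‖y‖ ≤ 1 := by
    rw [← sq_le_one_iff₀ (norm_nonneg y)]
    exact (sq_norm_le_dotProduct_self y).trans (openUnitBall_subset_closedUnitBall hy)
  rw [dist_eq_norm, add_sub_cancel_left, norm_smul, Real.norm_of_nonneg hr.1.le]
  exact (mul_le_of_le_one_right hr.1.le hy1).trans hr.2.le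

lemma IsHarmonicFunctional.le_traceHess (hΛ : IsHarmonicFunctional B Λ) (hB : B.PosSemidef)
    (htr : B.trace = 1) {φ : C(Fin d → ℝ, ℝ)} (hφ : ContDiff ℝ 2 φ)
    (hmean : ∀ᶠ r : ℝ in 𝓝[>] 0, φ x + c * r ^ 2 / 2 ≤ Λ (sphereValues φ x r)) :
    c ≤ traceHess B φ x := by
  by_contra! hlt
  obtain ⟨c', hc', hc'c⟩ := exists_between hlt
  have hopen : IsOpen {z | traceHess B φ z < c'} :=
    isOpen_lt (continuous_traceHess hφ) continuous_const
  have hneg : IsSubsolution B (-c') {z | traceHess B φ z < c'} (-φ : C(Fin d → ℝ, ℝ)) :=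
    .of_contDiff hB hφ.neg fun z (hz : traceHess B φ z < c') =>
      (neg_le_neg hz.le).trans_eq traceHess_neg.symm
  obtain ⟨r, hmean_r, hball, hr⟩ := (hmean.and ((eventually_forall_add_smul_mem isCompact_singleton
    hopen (singleton_subset_iff.2 hc')).and self_mem_nhdsWithin)).exists
  have hr0 : (0 : ℝ) < r := hr
  have hupper := hΛ.le_apply_sphereValues htr hneg hr0.ne' (hball x rfl)
  have hsphere : sphereValues (-φ) x r = -sphereValues φ x r := rfl
  rw [hsphere, map_neg, ContinuousMap.neg_apply] at hupper
  nlinarith [pow_pos hr0 2]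

end MeanValue

section Mollification

open MeasureTheory
open scoped Convolution

variable {d : ℕ} {B : Matrix (Fin d) (Fin d) ℝ} {Λ : C(unitSphere d, ℝ) →L[ℝ] ℝ}
  {ρ : (Fin d → ℝ) → ℝ} {c : ℝ} {V : Set (Fin d → ℝ)} {x : Fin d → ℝ} {U : C(Fin d → ℝ, ℝ)}

lemma continuous_sphereValues (r : ℝ) : Continuous fun x => sphereValues U x r :=
  (ContinuousMap.curry ⟨fun p : (Fin d → ℝ) × unitSphere d => U (p.1 + r • p.2.1),
    U.continuous.comp (continuous_fst.add
      ((continuous_subtype_val.comp continuous_snd).const_smul r))⟩).continuous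

lemma integrable_smul_sphereValues (hρ : Continuous ρ) (hρsupp : HasCompactSupport ρ) (r : ℝ) :
    Integrable fun t => ρ t • sphereValues U (x - t) r :=
  (hρ.smul ((continuous_sphereValues r).comp
    (continuous_const.sub continuous_id))).integrable_of_hasCompactSupport hρsupp.smul_right

lemma sphereValues_eq_integral (hρ : Continuous ρ) (hρsupp : HasCompactSupport ρ)
    {φ : C(Fin d → ℝ, ℝ)} (hφ : ∀ z, φ z = ∫ t, ρ t * U (z - t)) (r : ℝ) :
    sphereValues φ x r = ∫ t, ρ t • sphereValues U (x - t) r := by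
  ext y
  have hcomm := (ContinuousMap.evalCLM ℝ y).integral_comp_comm
    (integrable_smul_sphereValues (U := U) (x := x) hρ hρsupp r)
  calc sphereValues φ x r y = ∫ t, ρ t * U (x + r • y.1 - t) := hφ _
    _ = ∫ t, ρ t * U (x - t + r • y.1) := by simp only [sub_add_eq_add_sub]
    _ = (∫ t, ρ t • sphereValues U (x - t) r) y := hcomm

lemma IsHarmonicFunctional.le_apply_sphereValues_of_eq_integral (hΛ : IsHarmonicFunctional B Λ)
    (htr : B.trace = 1) (hU : IsSubsolution B c V U) (hρ : Continuous ρ)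
    (hρsupp : HasCompactSupport ρ) (hρ0 : ∀ t, 0 ≤ ρ t) (hρ1 : ∫ t, ρ t = 1)
    {φ : C(Fin d → ℝ, ℝ)} (hφ : ∀ z, φ z = ∫ t, ρ t * U (z - t)) {r : ℝ} (hr : r ≠ 0)
    (hV : ∀ t ∈ tsupport ρ, ∀ y ∈ openUnitBall d, x - t + r • y ∈ V) :
    φ x + c * r ^ 2 / 2 ≤ Λ (sphereValues φ x r) := by
  have hint := integrable_smul_sphereValues (U := U) (x := x) hρ hρsupp r
  have hintU : Integrable fun t => ρ t * U (x - t) :=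
    Continuous.integrable_of_hasCompactSupport (by fun_prop) hρsupp.mul_right
  have hintc : Integrable fun t => ρ t * (c * r ^ 2 / 2) :=
    Continuous.integrable_of_hasCompactSupport (by fun_prop) hρsupp.mul_right
  calc φ x + c * r ^ 2 / 2 = ∫ t, (ρ t * U (x - t) + ρ t * (c * r ^ 2 / 2)) := by
        rw [integral_add hintU hintc, ← hφ, integral_mul_const, hρ1, one_mul]
    _ ≤ ∫ t, Λ (ρ t • sphereValues U (x - t) r) := by
        refine integral_mono (hintU.add hintc) (Λ.integrable_comp hint) fun t => ?_
        rw [map_smul, smul_eq_mul, ← mul_add]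
        by_cases ht : t ∈ tsupport ρ
        · exact mul_le_mul_of_nonneg_left (hΛ.le_apply_sphereValues htr hU hr (hV t ht)) (hρ0 t)
        · simp [image_eq_zero_of_notMem_tsupport ht]
    _ = Λ (sphereValues φ x r) := by
        rw [Λ.integral_comp_comm hint, sphereValues_eq_integral hρ hρsupp hφ]

lemma IsSubsolution.le_traceHess_of_eq_integral (hU : IsSubsolution B c V U) (hV : IsOpen V)
    (hB : B ∈ S1set d) (hρ : Continuous ρ) (hρsupp : HasCompactSupport ρ) (hρ0 : ∀ t, 0 ≤ ρ t)
    (hρ1 : ∫ t, ρ t = 1) {φ : C(Fin d → ℝ, ℝ)} (hφ : ∀ z, φ z = ∫ t, ρ t * U (z - t))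
    (hφdiff : ContDiff ℝ 2 φ) (hx : ∀ t ∈ tsupport ρ, x - t ∈ V) : c ≤ traceHess B φ x := by
  obtain ⟨hpsd, htr⟩ := hB
  obtain ⟨Λ, hΛ⟩ := exists_isHarmonicFunctional hpsd (htr ▸ zero_lt_one)
  refine hΛ.le_traceHess hpsd htr hφdiff ?_
  have hcompact : IsCompact ((fun t => x - t) '' tsupport ρ) :=
    hρsupp.isCompact.image (by fun_prop)
  filter_upwards [eventually_forall_add_smul_mem hcompact hV (image_subset_iff.2 hx),
    self_mem_nhdsWithin] with r hball hr
  exact hΛ.le_apply_sphereValues_of_eq_integral htr hU hρ hρsupp hρ0 hρ1 hφ (ne_of_gt hr)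
    fun t ht => hball _ (mem_image_of_mem _ ht)

lemma exists_contDiff_approx_of_isSubsolution {c : Matrix (Fin d) (Fin d) ℝ → ℝ}
    (hU : ∀ B ∈ S1set d, IsSubsolution B (c B) V U) (hV : IsOpen V) {K : Set (Fin d → ℝ)}
    (hK : IsCompact K) (hKV : K ⊆ V) {κ : ℝ} (hκ : 0 < κ) :
    ∃ φ : (Fin d → ℝ) → ℝ, ContDiff ℝ 2 φ ∧ (∀ z ∈ K, |φ z - U z| ≤ κ) ∧
      ∀ z ∈ K, ∀ B ∈ S1set d, c B ≤ traceHess B φ z := by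
  obtain ⟨δ, hδ, hδV⟩ := hK.exists_cthickening_subset_open hV hKV
  obtain ⟨δ', hδ', hUδ'⟩ := Metric.mem_uniformity_dist.1
    (hK.uniformContinuousAt_of_continuousAt U (fun z _ => U.continuous.continuousAt)
      (Metric.dist_mem_uniformity hκ))
  have hmin : 0 < min δ δ' := lt_min hδ hδ'
  let b : ContDiffBump (0 : Fin d → ℝ) := ⟨min δ δ' / 2, min δ δ', half_pos hmin, half_lt_self hmin⟩
  let ρ : (Fin d → ℝ) → ℝ := b.normed volume
  have hφ : ContDiff ℝ 2 (ρ ⋆[ContinuousLinearMap.lsmul ℝ ℝ, volume] U) :=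
    b.hasCompactSupport_normed.contDiff_convolution_left _ b.contDiff_normed
      U.continuous.locallyIntegrable
  refine ⟨_, hφ, fun z hz => ?_, fun z hz B hB => ?_⟩
  · rw [← Real.dist_eq]
    refine b.dist_normed_convolution_le U.continuous.aestronglyMeasurable fun y hy => ?_
    rw [dist_comm]
    exact (hUδ' (lt_of_lt_of_le (by rwa [dist_comm]) (min_le_right δ δ')) hz).le
  · refine (hU B hB).le_traceHess_of_eq_integral (φ := ⟨_, hφ.continuous⟩) hV hB b.continuous_normed
      b.hasCompactSupport_normed b.nonneg_normed b.integral_normed (fun _ => rfl) hφ fun t ht => ?_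
    rw [b.tsupport_normed_eq, mem_closedBall_zero_iff] at ht
    refine hδV (Metric.mem_cthickening_of_dist_le _ z δ K hz ?_)
    simpa [dist_eq_norm] using ht.trans (min_le_left δ δ')

end Mollification

section Bellman

variable {d : ℕ} {B : Matrix (Fin d) (Fin d) ℝ}

lemma det_mem_Icc_of_mem_S1set (hB : B ∈ S1set d) : B.det ∈ Icc 0 1 := by
  obtain ⟨hpsd, htr⟩ := hB
  have hherm := hpsd.isHermitian
  have hsum : ∑ i, hherm.eigenvalues i = 1 := by
    simpa [htr] using hherm.trace_eq_sum_eigenvalues.symm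
  have hdet : B.det = ∏ i, hherm.eigenvalues i := by simpa using hherm.det_eq_prod_eigenvalues
  have hnonneg (i : Fin d) : 0 ≤ hherm.eigenvalues i := hpsd.eigenvalues_nonneg i
  rw [hdet]
  refine ⟨Finset.prod_nonneg fun i _ => hnonneg i,
    Finset.prod_le_one (fun i _ => hnonneg i) fun i _ => ?_⟩
  rw [← hsum]
  exact Finset.single_le_sum (fun i _ => hnonneg i) (Finset.mem_univ i)

lemma det_rpow_mem_Icc_of_mem_S1set (hB : B ∈ S1set d) : B.det ^ ((1 : ℝ) / d) ∈ Icc 0 1 :=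
  have hdet := det_mem_Icc_of_mem_S1set hB
  ⟨Real.rpow_nonneg hdet.1 _, Real.rpow_le_one hdet.1 hdet.2 (by positivity)⟩

lemma abs_apply_le_one_of_mem_S1set (hB : B ∈ S1set d) (i j : Fin d) : |B i j| ≤ 1 := by
  obtain ⟨hpsd, htr⟩ := hB
  have hsymm : B j i = B i j := by simpa using hpsd.isHermitian.apply i j
  have hdiag (k : Fin d) : B k k ≤ 1 := by
    rw [← htr]
    exact Finset.single_le_sum (f := fun k => B k k) (fun k _ => hpsd.diag_nonneg)
      (Finset.mem_univ k)
  have hquad (s : ℝ) : 0 ≤ B i i + s * (2 * B i j) + s ^ 2 * B j j := by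
    have hnonneg := hpsd.dotProduct_mulVec_nonneg (Pi.single i 1 + s • Pi.single j 1)
    simp only [star_trivial, mulVec_add, mulVec_smul, add_dotProduct, dotProduct_add,
      smul_dotProduct, dotProduct_smul, single_dotProduct, mulVec_single_one, col_apply, one_mul,
      smul_eq_mul, hsymm] at hnonneg
    linarith
  have hplus := hquad 1
  have hminus := hquad (-1)
  rw [abs_le]
  constructor <;> linarith [hdiag i, hdiag j]

lemma S1set_nonempty (hd : d ≠ 0) : (S1set d).Nonempty :=
  have : NeZero d := ⟨hd⟩
  ⟨_, inv_smul_vecMulVec_mem_S1set (e := Pi.single 0 1) (by simp)⟩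

lemma bddAbove_bval_image (A : Matrix (Fin d) (Fin d) ℝ) (a : ℝ) :
    BddAbove ((fun B => bval d A B a) '' S1set d) := by
  refine ⟨(∑ i, ∑ j, |A j i|) + |a|, ?_⟩
  rintro _ ⟨B, hB, rfl⟩
  have hdet := det_rpow_mem_Icc_of_mem_S1set hB
  have htrace : -(B * A).trace ≤ ∑ i, ∑ j, |A j i| :=
    calc -(B * A).trace ≤ |∑ i, ∑ j, B i j * A j i| := neg_le_abs _
      _ ≤ ∑ i, |∑ j, B i j * A j i| := Finset.abs_sum_le_sum_abs _ _
      _ ≤ ∑ i, ∑ j, |A j i| := Finset.sum_le_sum fun i _ =>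
        (Finset.abs_sum_le_sum_abs _ _).trans <| Finset.sum_le_sum fun j _ => by
          rw [abs_mul]
          exact mul_le_of_le_one_left (abs_nonneg _) (abs_apply_le_one_of_mem_S1set hB i j)
  have hsource : a * B.det ^ ((1 : ℝ) / d) ≤ |a| :=
    (mul_le_mul_of_nonneg_right (le_abs_self a) hdet.1).trans
      (mul_le_of_le_one_right (abs_nonneg a) hdet.2)
  exact add_le_add htrace hsource

lemma bval_le_bellman (hB : B ∈ S1set d) (A : Matrix (Fin d) (Fin d) ℝ) (a : ℝ) :
    bval d A B a ≤ bellman d A a :=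
  le_csSup (bddAbove_bval_image A a) (mem_image_of_mem _ hB)

lemma bellman_le (hd : d ≠ 0) {A : Matrix (Fin d) (Fin d) ℝ} {a b : ℝ}
    (hle : ∀ B ∈ S1set d, bval d A B a ≤ b) : bellman d A a ≤ b :=
  csSup_le ((S1set_nonempty hd).image _) (forall_mem_image.2 hle)

lemma bval_hessianM (φ : (Fin d → ℝ) → ℝ) (x : Fin d → ℝ) (a : ℝ) :
    bval d (hessianM d φ x) B a = a * B.det ^ ((1 : ℝ) / d) - traceHess B φ x :=
  neg_add_eq_sub _ _

end Bellman

section BellmanSubsolution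

variable {d : ℕ} {f u : (Fin d → ℝ) → ℝ} {Ω V : Set (Fin d → ℝ)} {x : Fin d → ℝ} {m r s κ : ℝ}

/-- Viscosity subsolutions in `Ω` of the Bellman equation with right-hand side `f`. -/
def IsBellmanSubsolution (f : (Fin d → ℝ) → ℝ) (Ω : Set (Fin d → ℝ)) (u : (Fin d → ℝ) → ℝ) : Prop :=
  ∀ φ : (Fin d → ℝ) → ℝ, ContDiffOn ℝ 2 φ Ω → ∀ x ∈ Ω,
    IsLocalMaxOn (fun y => u y - φ y) Ω x → bellman d (hessianM d φ x) (f x) ≤ 0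

/-- Viscosity supersolutions in `Ω` of the Bellman equation with right-hand side `f`. -/
def IsBellmanSupersolution (f : (Fin d → ℝ) → ℝ) (Ω : Set (Fin d → ℝ)) (v : (Fin d → ℝ) → ℝ) :
    Prop :=
  ∀ φ : (Fin d → ℝ) → ℝ, ContDiffOn ℝ 2 φ Ω → ∀ x ∈ Ω,
    IsLocalMinOn (fun y => v y - φ y) Ω x → 0 ≤ bellman d (hessianM d φ x) (f x)

namespace IsBellmanSubsolution

lemma isSubsolution (hu : IsBellmanSubsolution f Ω u) {B : Matrix (Fin d) (Fin d) ℝ}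
    (hB : B ∈ S1set d) (hV : V ⊆ Ω) (hm : ∀ z ∈ V, m ≤ f z) :
    IsSubsolution B (m * B.det ^ ((1 : ℝ) / d)) V u := by
  intro φ hφ z hz hmax
  have hbellman := (bval_le_bellman hB _ _).trans (hu φ hφ.contDiffOn z (hV hz) (hmax.on Ω))
  rw [bval_hessianM] at hbellman
  have hdet := det_rpow_mem_Icc_of_mem_S1set hB
  linarith [mul_le_mul_of_nonneg_right (hm z hz) hdet.1]

lemma continuousOn (hu : IsBellmanSubsolution f Ω u) (husc : UpperSemicontinuousOn u Ω)
    (hVo : IsOpen V) (hVc : Convex ℝ V) (hV : V ⊆ Ω) (hm : ∀ z ∈ V, m ≤ f z) :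
    ContinuousOn u V := by
  refine continuousOn_of_isSubsolution (C := |m|) hVo hVc (husc.mono hV) fun B hB φ hφ z hz hmax =>
    le_trans ?_ (hu.isSubsolution hB hV hm φ hφ z hz hmax)
  have hdet := det_rpow_mem_Icc_of_mem_S1set hB
  linarith [mul_le_of_le_one_right (abs_nonneg m) hdet.2,
    mul_le_mul_of_nonneg_right (neg_abs_le m) hdet.1]

lemma exists_contDiff_approx (hu : IsBellmanSubsolution f Ω u) (husc : UpperSemicontinuousOn u Ω)
    (hball : Metric.ball x r ⊆ Ω) (hm : ∀ z ∈ Metric.ball x r, m ≤ f z) (hsr : s < r)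
    (hκ : 0 < κ) : ∃ φ : (Fin d → ℝ) → ℝ, ContDiff ℝ 2 φ ∧
      (∀ z ∈ Metric.closedBall x s, |φ z - u z| ≤ κ) ∧
      ∀ z ∈ Metric.closedBall x s, ∀ B ∈ S1set d,
        m * B.det ^ ((1 : ℝ) / d) ≤ traceHess B φ z := by
  obtain ⟨t, hst, htr⟩ := exists_between hsr
  have hcont : ContinuousOn u (Metric.closedBall x t) :=
    (hu.continuousOn husc Metric.isOpen_ball (convex_ball x r) hball hm).mono
      (Metric.closedBall_subset_ball htr)
  obtain ⟨U, hU⟩ := ContinuousMap.exists_restrict_eq Metric.isClosed_closedBall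
    ⟨(Metric.closedBall x t).domRestrict u, hcont.domRestrict⟩
  have hUu : EqOn U u (Metric.closedBall x t) := fun y hy => DFunLike.congr_fun hU ⟨y, hy⟩
  have htr' : Metric.ball x t ⊆ Metric.ball x r := Metric.ball_subset_ball htr.le
  have hUsub (B : Matrix (Fin d) (Fin d) ℝ) (hB : B ∈ S1set d) :
      IsSubsolution B (m * B.det ^ ((1 : ℝ) / d)) (Metric.ball x t) U :=
    (hu.isSubsolution hB (htr'.trans hball) fun z hz => hm z (htr' hz)).congr_of_eqOn
      Metric.isOpen_ball (hUu.mono Metric.ball_subset_closedBall)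
  obtain ⟨φ, hφ, hφU, hφB⟩ := exists_contDiff_approx_of_isSubsolution hUsub Metric.isOpen_ball
    (isCompact_closedBall x s) (Metric.closedBall_subset_ball hst) hκ
  refine ⟨φ, hφ, fun z hz => ?_, hφB⟩
  rw [← hUu (Metric.closedBall_subset_closedBall hst.le hz)]
  exact hφU z hz

end IsBellmanSubsolution

end BellmanSubsolution

section Comparison

variable {d : ℕ} {Ω : Set (Fin d → ℝ)} {f u v w φ : (Fin d → ℝ) → ℝ} {x : Fin d → ℝ} {η ρ : ℝ}

lemma exists_isMaxOn_add_mul_dotProduct_self (hΩo : IsOpen Ω) (hΩb : Bornology.IsBounded Ω)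
    (hw : UpperSemicontinuousOn w (closure Ω)) (hbd : ∀ y ∈ frontier Ω, w y ≤ 0)
    (hx : x ∈ closure Ω) (hwx : 0 < w x) :
    ∃ η > 0, ∃ z ∈ Ω, IsMaxOn (fun y => w y + η * (y ⬝ᵥ y)) (closure Ω) z := by
  have hcompact := hΩb.isCompact_closure
  have hcont : Continuous fun y : Fin d → ℝ => y ⬝ᵥ y := contDiff_dotProduct_self.continuous
  obtain ⟨q, -, hq⟩ := hcompact.exists_isMaxOn ⟨x, hx⟩ hcont.continuousOn
  set R := q ⬝ᵥ q
  have hR : 0 < R + 1 := by linarith [dotProduct_self_nonneg q]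
  have hη : 0 < w x / (R + 1) := div_pos hwx hR
  obtain ⟨z, hz, hzmax⟩ := (hw.add
    (hcont.const_mul (w x / (R + 1))).continuousOn.upperSemicontinuousOn).exists_isMaxOn
      ⟨x, hx⟩ hcompact
  refine ⟨w x / (R + 1), hη, z, ?_, hzmax⟩
  by_contra hzΩ
  have hwz : w z ≤ 0 := hbd z (hΩo.frontier_eq ▸ ⟨hz, hzΩ⟩)
  have hzx : w x + w x / (R + 1) * (x ⬝ᵥ x) ≤ w z + w x / (R + 1) * (z ⬝ᵥ z) := hzmax hx
  have hzR : w x / (R + 1) * (z ⬝ᵥ z) ≤ w x / (R + 1) * R :=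
    mul_le_mul_of_nonneg_left (hq hz) hη.le
  have hsplit : w x / (R + 1) * (R + 1) = w x := div_mul_cancel₀ _ hR.ne'
  linarith [mul_nonneg hη.le (dotProduct_self_nonneg x)]

/-- The perturbation `y ↦ η |y|² - (η / 2) |y - x|²` of the test function: the first term makes it
strict, the second localises the extremum near `x`. -/
noncomputable def testPerturbation (η : ℝ) (x y : Fin d → ℝ) : ℝ :=
  η * (y ⬝ᵥ y) - η / 2 * ((y - x) ⬝ᵥ (y - x))

lemma contDiff_testPerturbation : ContDiff ℝ 2 (testPerturbation η x) :=
  (contDiff_const.mul contDiff_dotProduct_self).sub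
    (contDiff_const.mul (contDiff_dotProduct_self.comp (contDiff_id.sub contDiff_const)))

lemma traceHess_testPerturbation (B : Matrix (Fin d) (Fin d) ℝ) (z : Fin d → ℝ) :
    traceHess B (testPerturbation η x) z = η * B.trace := by
  have hsq : ContDiff ℝ 2 fun y : Fin d → ℝ => (y - x) ⬝ᵥ (y - x) :=
    contDiff_dotProduct_self.comp (contDiff_id.sub contDiff_const)
  have htranslate : traceHess B (fun y => (y - x) ⬝ᵥ (y - x)) z = 2 * B.trace := by
    have hcomp := traceHess_comp_add_smul (B := B) (x := -x) (y := z) contDiff_dotProduct_self 1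
    simpa [traceHess_dotProduct_self, neg_add_eq_sub] using hcomp
  unfold testPerturbation
  rw [traceHess_sub (contDiff_const.mul contDiff_dotProduct_self) (contDiff_const.mul hsq),
    traceHess_const_mul contDiff_dotProduct_self, traceHess_const_mul hsq, htranslate,
    traceHess_dotProduct_self]
  ring

lemma exists_isLocalMin_sub_testPerturbation (hη : 0 < η) (hρ : 0 < ρ)
    (hv : LowerSemicontinuousOn v (Metric.closedBall x ρ))
    (hmax : IsMaxOn (fun y => u y - v y + η * (y ⬝ᵥ y)) (Metric.closedBall x ρ) x)
    (hφ : Continuous φ) (hφu : ∀ y ∈ Metric.closedBall x ρ, |φ y - u y| ≤ η * ρ ^ 2 / 8) :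
    ∃ z ∈ Metric.ball x ρ, IsLocalMin (fun y => v y - (φ y + testPerturbation η x y)) z := by
  have hcont : Continuous fun y => -(φ y + testPerturbation η x y) :=
    (hφ.add contDiff_testPerturbation.continuous).neg
  have hlsc : LowerSemicontinuousOn (fun y => v y - (φ y + testPerturbation η x y))
      (Metric.closedBall x ρ) := by
    simpa only [sub_eq_add_neg] using hv.add hcont.continuousOn.lowerSemicontinuousOn
  have hx : x ∈ Metric.closedBall x ρ := Metric.mem_closedBall_self hρ.le
  obtain ⟨z, hz, hzmin⟩ := hlsc.exists_isMinOn ⟨x, hx⟩ (isCompact_closedBall x ρ)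
  suffices hzball : z ∈ Metric.ball x ρ from ⟨z, hzball, hzmin.isLocalMin
    (mem_of_superset (Metric.isOpen_ball.mem_nhds hzball) Metric.ball_subset_closedBall)⟩
  by_contra hzball
  have hdist : ρ ^ 2 ≤ (z - x) ⬝ᵥ (z - x) := by
    rw [Metric.mem_ball, dist_eq_norm, not_lt] at hzball
    exact (pow_le_pow_left₀ hρ.le hzball 2).trans (sq_norm_le_dotProduct_self _)
  have hzx : v z - (φ z + testPerturbation η x z) ≤ v x - (φ x + testPerturbation η x x) :=
    hzmin hx
  simp only [testPerturbation, sub_self, dotProduct_zero, mul_zero, sub_zero] at hzx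
  have hxz : u z - v z + η * (z ⬝ᵥ z) ≤ u x - v x + η * (x ⬝ᵥ x) := hmax hz
  linarith [(abs_le.1 (hφu z hz)).2, (abs_le.1 (hφu x hx)).1,
    mul_le_mul_of_nonneg_left hdist (half_pos hη).le, mul_pos hη (pow_pos hρ 2)]

lemma IsBellmanSupersolution.not_isMaxOn_sub_add_mul_dotProduct_self (hd : d ≠ 0) (hΩo : IsOpen Ω)
    (hf : ContinuousOn f Ω) (husc : UpperSemicontinuousOn u Ω) (hu : IsBellmanSubsolution f Ω u)
    (hlsc : LowerSemicontinuousOn v Ω) (hv : IsBellmanSupersolution f Ω v) (hη : 0 < η)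
    (hx : x ∈ Ω) : ¬ IsMaxOn (fun y => u y - v y + η * (y ⬝ᵥ y)) Ω x := by
  intro hmax
  have hnear : ∀ᶠ z in 𝓝 x, z ∈ Ω ∧ dist (f z) (f x) < η / 4 :=
    Eventually.and (hΩo.mem_nhds hx) <| (hf.continuousAt (hΩo.mem_nhds hx)).eventually
      (Metric.ball_mem_nhds _ (by positivity))
  obtain ⟨r, hr, hball⟩ := Metric.eventually_nhds_iff_ball.1 hnear
  have hfr (z : Fin d → ℝ) (hz : z ∈ Metric.ball x r) : |f z - f x| < η / 4 := (hball z hz).2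
  have hhalf : Metric.closedBall x (r / 2) ⊆ Metric.ball x r :=
    Metric.closedBall_subset_ball (half_lt_self hr)
  have hhalfΩ : Metric.closedBall x (r / 2) ⊆ Ω := fun z hz => (hball z (hhalf hz)).1
  obtain ⟨φ, hφ, hφu, hφB⟩ := hu.exists_contDiff_approx (m := f x - η / 4) husc
    (fun z hz => (hball z hz).1) (fun z hz => by linarith [(abs_lt.1 (hfr z hz)).1])
    (half_lt_self hr) (κ := η * (r / 2) ^ 2 / 8) (by positivity)
  obtain ⟨z, hz, hzmin⟩ := exists_isLocalMin_sub_testPerturbation hη (half_pos hr)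
    (hlsc.mono hhalfΩ) (hmax.on_subset hhalfΩ) hφ.continuous hφu
  replace hz := Metric.ball_subset_closedBall hz
  have hsuper := hv _ (hφ.add contDiff_testPerturbation).contDiffOn z (hhalfΩ hz) (hzmin.on Ω)
  have hstrict :
      bellman d (hessianM d (fun y => φ y + testPerturbation η x y) z) (f z) ≤ -(η / 2) := by
    refine bellman_le hd fun B hB => ?_
    rw [bval_hessianM, traceHess_add hφ contDiff_testPerturbation, traceHess_testPerturbation, hB.2]
    have hdet := det_rpow_mem_Icc_of_mem_S1set hB
    have hfz : f z * B.det ^ ((1 : ℝ) / d) ≤ (f x + η / 4) * B.det ^ ((1 : ℝ) / d) :=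
      mul_le_mul_of_nonneg_right (by linarith [(abs_lt.1 (hfr z (hhalf hz))).2]) hdet.1
    nlinarith [hφB z hz B hB, mul_le_of_le_one_right hη.le hdet.2]
  exact absurd (hsuper.trans hstrict) (by linarith)

theorem stmt_12_general (hd : d ≠ 0) (hΩo : IsOpen Ω) (hΩb : Bornology.IsBounded Ω)
    (hf : ContinuousOn f Ω) (husc : UpperSemicontinuousOn u (closure Ω))
    (hu : IsBellmanSubsolution f Ω u) (hlsc : LowerSemicontinuousOn v (closure Ω))
    (hv : IsBellmanSupersolution f Ω v) (hbd : ∀ x ∈ frontier Ω, u x ≤ v x) :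
    ∀ x ∈ closure Ω, u x ≤ v x := by
  by_contra! hlt
  obtain ⟨x, hx, hvu⟩ := hlt
  have hdiff : UpperSemicontinuousOn (fun y => u y - v y) (closure Ω) := by
    simpa only [sub_eq_add_neg, Pi.neg_apply] using husc.add hlsc.neg
  obtain ⟨η, hη, z, hz, hmax⟩ := exists_isMaxOn_add_mul_dotProduct_self hΩo hΩb hdiff
    (fun y hy => sub_nonpos.2 (hbd y hy)) hx (sub_pos.2 hvu)
  exact hv.not_isMaxOn_sub_add_mul_dotProduct_self hd hΩo hf (husc.mono subset_closure) hu
    (hlsc.mono subset_closure) hη hz (hmax.on_subset subset_closure)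

end Comparison

/-- Comparison principle for the Bellman equation: if a subsolution u lies below a
supersolution v on the boundary, then u ≤ v on the closure. -/
theorem stmt_12 (d : ℕ) (hd : 2 ≤ d) (Ω : Set (Fin d → ℝ)) (hΩo : IsOpen Ω)
    (hΩb : Bornology.IsBounded Ω)
    (f : (Fin d → ℝ) → ℝ) (hfc : ContinuousOn f (closure Ω))
    (hf0 : ∀ x ∈ closure Ω, 0 ≤ f x)
    (u v : (Fin d → ℝ) → ℝ)
    (husc : UpperSemicontinuousOn u (closure Ω))
    (hsub : ∀ φ : (Fin d → ℝ) → ℝ, ContDiffOn ℝ 2 φ Ω →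
      ∀ x ∈ Ω, IsLocalMaxOn (fun y => u y - φ y) Ω x →
        bellman d (hessianM d φ x) (f x) ≤ 0)
    (hlsc : LowerSemicontinuousOn v (closure Ω))
    (hsup : ∀ φ : (Fin d → ℝ) → ℝ, ContDiffOn ℝ 2 φ Ω →
      ∀ x ∈ Ω, IsLocalMinOn (fun y => v y - φ y) Ω x →
        0 ≤ bellman d (hessianM d φ x) (f x))
    (hbd : ∀ x ∈ frontier Ω, u x ≤ v x) :
    ∀ x ∈ closure Ω, u x ≤ v x :=
  stmt_12_general (by lia) hΩo hΩb (hfc.mono subset_closure) husc hsub hlsc hsup hbd
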